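/- For every model triple point, all signs s₁, s₂, s₃ ∈ {+1, −1}, and all sufficiently small ε > 0, the model triple-point integrals have the explicit values I_X^{X′₁, s₁, s₂, s₃} = s₁s₂/2, I_X^{(X′₂,l), s₁, s₂, s₃} = I_X^{(X′₂,r), s₁, s₂, s₃} = s₂s₃/2, and I_X^{X′₃, s₁, s₂, s₃} = s₃s₁/2. -/

import Mathlib

open MeasureTheory Filter Topology Set

noncomputable section

abbrev E2 : Type := EuclideanSpace ℝ (Fin 2)
abbrev E3 : Type := EuclideanSpace ℝ (Fin 3)
abbrev E4 : Type := EuclideanSpace ℝ (Fin 4)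
abbrev E6 : Type := EuclideanSpace ℝ (Fin 6)

/-- The point of `ℝ³` with the given coordinates. -/
def mk3 (x y z : ℝ) : E3 := (WithLp.equiv 2 (Fin 3 → ℝ)).symm ![x, y, z]

/-- The north pole `N = (0,0,1)` of `S² ⊆ ℝ³`. -/
def NP : E3 := mk3 0 0 1

/-- Projection of `ℝ³` onto the plane `N^⊥` (the first two coordinates). -/
def pr12 (v : E3) : ℝ × ℝ := (v 0, v 1)

/-- The `N`-coordinate. -/
def pr3 (v : E3) : ℝ := v 2

/-- `unitv v = v / ‖v‖`. -/
def unitv (v : E3) : E3 := ‖v‖⁻¹ • v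

/-- Determinant of the projections to `N^⊥` of two vectors (first vector, then second). -/
def cross2 (a b : E3) : ℝ := a 0 * b 1 - a 1 * b 0

/-- 3×3 determinant (scalar triple product); for `p ∈ S²` and `v, w` tangent to `S²` at
`p`, this is the value of the standard area form of `S²` at `p` on `(v, w)`. -/
def det3 (p v w : E3) : ℝ :=
  p 0 * (v 1 * w 2 - v 2 * w 1) - p 1 * (v 0 * w 2 - v 2 * w 0) +
    p 2 * (v 0 * w 1 - v 1 * w 0)

/-! ### Long knots and 3-component long links -/

/-- A long knot: a smooth embedding `ℝ ↪ ℝ³` which is standard outside `[-1,1]`. -/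
def IsLongKnot (f : ℝ → E3) : Prop :=
  ContDiff ℝ (⊤ : ℕ∞) f ∧ Function.Injective f ∧ (∀ t, deriv f t ≠ 0) ∧
    ∀ x : ℝ, 1 ≤ |x| → f x = mk3 x 0 0

/-- Smooth isotopy of long knots. -/
def KnotIsotopic (f₀ f₁ : ℝ → E3) : Prop :=
  ∃ H : ℝ → ℝ → E3,
    ContDiff ℝ (⊤ : ℕ∞) (fun p : ℝ × ℝ => H p.1 p.2) ∧
    (∀ s, IsLongKnot (H s)) ∧ H 0 = f₀ ∧ H 1 = f₁

/-- A 3-component long link: a smooth embedding `ℝ ⊔ ℝ ⊔ ℝ ↪ ℝ³`, standard outside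
`[-1,1]`, component `k` (for `k = 1,2,3`, i.e. index `i = k - 1 : Fin 3`) having ends
`x ↦ (x, (2 - k)|x|, 0)`. -/
def IsLongLink3 (f : Fin 3 → ℝ → E3) : Prop :=
  (∀ i, ContDiff ℝ (⊤ : ℕ∞) (f i)) ∧
  (∀ i j s t, f i s = f j t → i = j ∧ s = t) ∧
  (∀ i t, deriv (f i) t ≠ 0) ∧
  ∀ i (x : ℝ), 1 ≤ |x| → f i x = mk3 x ((1 - ((i : ℕ) : ℝ)) * |x|) 0

/-- Smooth isotopy of 3-component long links. -/
def LinkIsotopic (f₀ f₁ : Fin 3 → ℝ → E3) : Prop :=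
  ∃ H : ℝ → Fin 3 → ℝ → E3,
    (∀ i, ContDiff ℝ (⊤ : ℕ∞) (fun p : ℝ × ℝ => H p.1 i p.2)) ∧
    (∀ s, IsLongLink3 (H s)) ∧ H 0 = f₀ ∧ H 1 = f₁

/-! ### Diagrams, crossings and Gauss diagram pairings -/

/-- All self-intersections of the projection of the long knot `f` are transverse
(any two branches meeting at a multiple point have independent projected tangents). -/
def TransverseK (f : ℝ → E3) : Prop :=
  ∀ t u, t ≠ u → pr12 (f t) = pr12 (f u) → cross2 (deriv f t) (deriv f u) ≠ 0

/-- The diagram of `f` has only transverse double points. -/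
def OnlyDoubleK (f : ℝ → E3) : Prop :=
  TransverseK f ∧
  ∀ t u v : ℝ, t ≠ u → u ≠ v → t ≠ v →
    pr12 (f t) = pr12 (f u) → pr12 (f u) = pr12 (f v) → False

/-- All self-intersections of the projection of the long link `f` are transverse. -/
def TransverseL (f : Fin 3 → ℝ → E3) : Prop :=
  ∀ i j s t, (i, s) ≠ (j, t) → pr12 (f i s) = pr12 (f j t) →
    cross2 (deriv (f i) s) (deriv (f j) t) ≠ 0

/-- The diagram of the long link `f` has only transverse double points. -/
def OnlyDoubleL (f : Fin 3 → ℝ → E3) : Prop :=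
  TransverseL f ∧
  ∀ i j k s t u, (i, s) ≠ (j, t) → (j, t) ≠ (k, u) → (i, s) ≠ (k, u) →
    pr12 (f i s) = pr12 (f j t) → pr12 (f j t) = pr12 (f k u) → False

/-- Crossings of a long knot diagram: pairs `(t, u)` with `t` on the lower and `u` on the
upper strand; the corresponding chord of the Gauss diagram is directed from `t` to `u`. -/
def CrossingK (f : ℝ → E3) : Set (ℝ × ℝ) :=
  {p | p.1 ≠ p.2 ∧ pr12 (f p.1) = pr12 (f p.2) ∧ pr3 (f p.1) < pr3 (f p.2)}

/-- The sign of the crossing `p = (t, u)` (`+1` iff the projected tangent of the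
over-strand followed by that of the under-strand is a positive basis of `N^⊥`). -/
def csignK (f : ℝ → E3) (p : ℝ × ℝ) : ℝ :=
  Real.sign (cross2 (deriv f p.2) (deriv f p.1))

/-- Gauss diagram pairing for a long knot: the sum, over all pairs of chords of the Gauss
diagram of `f` in the relative position prescribed by `R`, of the products of signs. -/
def pairK (f : ℝ → E3) (R : ℝ × ℝ → ℝ × ℝ → Prop) : ℝ :=
  ∑ᶠ q ∈ {q : (ℝ × ℝ) × (ℝ × ℝ) | q.1 ∈ CrossingK f ∧ q.2 ∈ CrossingK f ∧ R q.1 q.2},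
    csignK f q.1 * csignK f q.2

/-- `⟨X, G_D⟩` : chords `x₁ → x₃` and `x₄ → x₂` with `x₁ < x₂ < x₃ < x₄`. -/
def pairXK (f : ℝ → E3) : ℝ :=
  pairK f fun p q => p.1 < q.2 ∧ q.2 < p.2 ∧ p.2 < q.1

/-- `⟨X′₁, G_D⟩` : chords `a → b` and `c → a` with `a < b < c`. -/
def pairX1K (f : ℝ → E3) : ℝ :=
  pairK f fun p q => q.2 = p.1 ∧ p.1 < p.2 ∧ p.2 < q.1

/-- `⟨X′₂, G_D⟩` : chords `a → b` and `c → b` with `a < b < c`. -/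
def pairX2K (f : ℝ → E3) : ℝ :=
  pairK f fun p q => q.2 = p.2 ∧ p.1 < p.2 ∧ p.2 < q.1

/-- `⟨X′₃, G_D⟩` : chords `a → c` and `c → b` with `a < b < c`. -/
def pairX3K (f : ℝ → E3) : ℝ :=
  pairK f fun p q => p.2 = q.1 ∧ p.1 < q.2 ∧ q.2 < p.2

/-- Crossings of a 3-strand diagram between strand `i` (under) and strand `j` (over);
the corresponding chord is directed from `p.1` on strand `i` to `p.2` on strand `j`. -/
def CrossingL (f : Fin 3 → ℝ → E3) (i j : Fin 3) : Set (ℝ × ℝ) :=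
  {p | pr12 (f i p.1) = pr12 (f j p.2) ∧ pr3 (f i p.1) < pr3 (f j p.2)}

/-- The sign of the crossing `p` between strand `i` (under) and strand `j` (over). -/
def csignL (f : Fin 3 → ℝ → E3) (i j : Fin 3) (p : ℝ × ℝ) : ℝ :=
  Real.sign (cross2 (deriv (f j) p.2) (deriv (f i) p.1))

/-- Gauss diagram pairing for a 3-component long link. -/
def pairL (f : Fin 3 → ℝ → E3) (i₁ j₁ i₂ j₂ : Fin 3) (R : ℝ × ℝ → ℝ × ℝ → Prop) : ℝ :=
  ∑ᶠ q ∈ {q : (ℝ × ℝ) × (ℝ × ℝ) |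
      q.1 ∈ CrossingL f i₁ j₁ ∧ q.2 ∈ CrossingL f i₂ j₂ ∧ R q.1 q.2},
    csignL f i₁ j₁ q.1 * csignL f i₂ j₂ q.2

/-- `⟨𝒳₁, G_D⟩` : a chord from `t` on strand 1 to strand 2, and a chord from strand 3 to
`t′` on strand 1, with `t < t′`. -/
def pairL1 (f : Fin 3 → ℝ → E3) : ℝ := pairL f 0 1 2 0 fun p q => p.1 < q.2

/-- `⟨𝒳₂, G_D⟩` : a chord from strand 1 to `u` on strand 2, and a chord from strand 3 to
`u′` on strand 2, with `u < u′`. -/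
def pairL2 (f : Fin 3 → ℝ → E3) : ℝ := pairL f 0 1 2 1 fun p q => p.2 < q.2

/-- `⟨𝒳₃, G_D⟩` : a chord from strand 1 to `v` on strand 3, and a chord from `v′` on
strand 3 to strand 2, with `v < v′`. -/
def pairL3 (f : Fin 3 → ℝ → E3) : ℝ := pairL f 0 2 2 1 fun p q => p.2 < q.1

/-- `⟨𝒳′₁, G_D⟩` : as `𝒳₁` but with `t = t′` (a triple point). -/
def pairL1' (f : Fin 3 → ℝ → E3) : ℝ := pairL f 0 1 2 0 fun p q => p.1 = q.2

/-- `⟨𝒳′₂, G_D⟩` : as `𝒳₂` but with `u = u′` (a triple point). -/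
def pairL2' (f : Fin 3 → ℝ → E3) : ℝ := pairL f 0 1 2 1 fun p q => p.2 = q.2

/-- `⟨𝒳′₃, G_D⟩` : as `𝒳₃` but with `v = v′` (a triple point). -/
def pairL3' (f : Fin 3 → ℝ → E3) : ℝ := pairL f 0 2 2 1 fun p q => p.2 = q.1

/-! ### The localized unit 2-form `η` on `S²` -/

/-- The action of a 2×2 matrix on `ℝ³ = ℝ² × ℝ`, acting on the first two coordinates. -/
def act2 (A : Matrix (Fin 2) (Fin 2) ℝ) (v : E3) : E3 :=
  mk3 (A 0 0 * v 0 + A 0 1 * v 1) (A 1 0 * v 0 + A 1 1 * v 1) (v 2)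

/-- `IsEtaForm ε g` says that `η = g · (standard area form of S²)` is a smooth 2-form on
`S²` such that: (i) `supp η` lies in the `ε`-neighbourhood of the north pole `N`;
(ii) `φ*η = det φ · η` for every `φ ∈ O(2) ⊆ O(3)` (since `φ* (area form) = det φ ·
(area form)`, this amounts to `g ∘ φ = g`); (iii) `∫_{S²} η = 1`, i.e. the integral of
`g` against the surface measure of `S²` is `1`. -/
def IsEtaForm (ε : ℝ) (g : E3 → ℝ) : Prop :=
  ContDiff ℝ (⊤ : ℕ∞) g ∧
  (∀ v : E3, ‖v‖ = 1 → g v ≠ 0 → ‖v - NP‖ < ε) ∧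
  (∀ A : Matrix (Fin 2) (Fin 2) ℝ, A * A.transpose = 1 →
    ∀ v : E3, ‖v‖ = 1 → g (act2 A v) = g v) ∧
  ∫ v : Metric.sphere (0 : E3) 1, g v ∂((volume : Measure E3).toSphere) = 1

/-! ### Configuration space integrals -/

/-- `i`-th partial derivative of a map `ℝⁿ → ℝ³`. -/
def pdv {n : ℕ} (h : EuclideanSpace ℝ (Fin n) → E3) (i : Fin n)
    (x : EuclideanSpace ℝ (Fin n)) : E3 :=
  fderiv ℝ h x (EuclideanSpace.single i 1)

/-- The pullback `h*η` (for `η = g · (area form)`) evaluated at the point `x` on the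
coordinate vectors `(e_i, e_j)`. -/
def form2 {n : ℕ} (g : E3 → ℝ) (h : EuclideanSpace ℝ (Fin n) → E3)
    (x : EuclideanSpace ℝ (Fin n)) (i j : Fin n) : ℝ :=
  g (h x) * det3 (h x) (pdv h i x) (pdv h j x)

/-- `(h*η ∧ k*η)(e₀, e₁, e₂, e₃)` at `x`. -/
def wedge22 (g : E3 → ℝ) (h k : E4 → E3) (x : E4) : ℝ :=
  (1 / 4) * ∑ σ : Equiv.Perm (Fin 4),
    ((Equiv.Perm.sign σ : ℤ) : ℝ) * form2 g h x (σ 0) (σ 1) * form2 g k x (σ 2) (σ 3)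

/-- `(h*η ∧ k*η ∧ l*η)(e₀, …, e₅)` at `x`. -/
def wedge222 (g : E3 → ℝ) (h k l : E6 → E3) (x : E6) : ℝ :=
  (1 / 8) * ∑ σ : Equiv.Perm (Fin 6),
    ((Equiv.Perm.sign σ : ℤ) : ℝ) * form2 g h x (σ 0) (σ 1) * form2 g k x (σ 2) (σ 3) *
      form2 g l x (σ 4) (σ 5)

/-- The configuration space `C_X = {x₁ < x₂ < x₃ < x₄}`. -/
def CX : Set E4 := {x | x 0 < x 1 ∧ x 1 < x 2 ∧ x 2 < x 3}

/-- The integrand `ω_X = h₁₃*η ∧ h₄₂*η` for a long knot. -/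
def omegaX (f : ℝ → E3) (g : E3 → ℝ) : E4 → ℝ :=
  wedge22 g (fun x => unitv (f (x 2) - f (x 0))) (fun x => unitv (f (x 1) - f (x 3)))

/-- The configuration space integral `I_X(f)` of a long knot. -/
def IX (f : ℝ → E3) (g : E3 → ℝ) : ℝ := ∫ x in CX, omegaX f g x

/-- The free point `x₄ ∈ ℝ³` in a `Y`-configuration `(x₁,x₂,x₃;x₄) ∈ ℝ³ × ℝ³ = ℝ⁶`. -/
def ptY (x : E6) : E3 := mk3 (x 3) (x 4) (x 5)

/-- The configuration space `C_Y(f)` for a long knot. -/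
def CY (f : ℝ → E3) : Set E6 :=
  {x | x 0 < x 1 ∧ x 1 < x 2 ∧ ptY x ≠ f (x 0) ∧ ptY x ≠ f (x 1) ∧ ptY x ≠ f (x 2)}

/-- The integrand `ω_Y = h₁₄*η ∧ h₄₂*η ∧ h₃₄*η` for a long knot. -/
def omegaY (f : ℝ → E3) (g : E3 → ℝ) : E6 → ℝ :=
  wedge222 g (fun x => unitv (ptY x - f (x 0))) (fun x => unitv (f (x 1) - ptY x))
    (fun x => unitv (ptY x - f (x 2)))

/-- The configuration space integral `I_Y(f)` of a long knot. -/
def IY (f : ℝ → E3) (g : E3 → ℝ) : ℝ := ∫ x in CY f, omegaY f g x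

def CL1 : Set E4 := {x | x 0 < x 1}
def CL2 : Set E4 := {x | x 1 < x 2}
def CL3 : Set E4 := {x | x 2 < x 3}

/-- The integrand of `I_{𝒳₁}(f)` for a 3-component long link. -/
def omegaL1 (f : Fin 3 → ℝ → E3) (g : E3 → ℝ) : E4 → ℝ :=
  wedge22 g (fun x => unitv (f 1 (x 2) - f 0 (x 0))) (fun x => unitv (f 2 (x 3) - f 0 (x 1)))

/-- The integrand of `I_{𝒳₂}(f)` for a 3-component long link. -/
def omegaL2 (f : Fin 3 → ℝ → E3) (g : E3 → ℝ) : E4 → ℝ :=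
  wedge22 g (fun x => unitv (f 1 (x 1) - f 0 (x 0))) (fun x => unitv (f 1 (x 2) - f 2 (x 3)))

/-- The integrand of `I_{𝒳₃}(f)` for a 3-component long link. -/
def omegaL3 (f : Fin 3 → ℝ → E3) (g : E3 → ℝ) : E4 → ℝ :=
  wedge22 g (fun x => unitv (f 2 (x 2) - f 0 (x 0))) (fun x => unitv (f 1 (x 1) - f 2 (x 3)))

/-- The configuration space integral `I_{𝒳₁}(f)`. -/
def IL1 (f : Fin 3 → ℝ → E3) (g : E3 → ℝ) : ℝ := ∫ x in CL1, omegaL1 f g x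

/-- The configuration space integral `I_{𝒳₂}(f)`. -/
def IL2 (f : Fin 3 → ℝ → E3) (g : E3 → ℝ) : ℝ := ∫ x in CL2, omegaL2 f g x

/-- The configuration space integral `I_{𝒳₃}(f)`. -/
def IL3 (f : Fin 3 → ℝ → E3) (g : E3 → ℝ) : ℝ := ∫ x in CL3, omegaL3 f g x

/-- The configuration space `C_𝒴(f)` for a 3-component long link. -/
def CYL (f : Fin 3 → ℝ → E3) : Set E6 :=
  {x | ptY x ≠ f 0 (x 0) ∧ ptY x ≠ f 1 (x 1) ∧ ptY x ≠ f 2 (x 2)}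

/-- The integrand `ω_𝒴 = h₁₄*η ∧ h₄₂*η ∧ h₃₄*η` for a 3-component long link. -/
def omegaYL (f : Fin 3 → ℝ → E3) (g : E3 → ℝ) : E6 → ℝ :=
  wedge222 g (fun x => unitv (ptY x - f 0 (x 0))) (fun x => unitv (f 1 (x 1) - ptY x))
    (fun x => unitv (ptY x - f 2 (x 2)))

/-- The configuration space integral `I_𝒴(f)`. -/
def ILY (f : Fin 3 → ℝ → E3) (g : E3 → ℝ) : ℝ := ∫ x in CYL f, omegaYL f g x

/-! ### Model triple points -/

/-- The affine parametrization `t ↦ a + t • v` of a straight segment. -/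
def seg (a v : E3) (t : ℝ) : E3 := a + t • v

/-- A model triple point: three straight segments `S₁, S₂, S₃` (indexed by `0, 1, 2`),
`S_k` parametrized by `seg (a k) (v k) : (-δ, δ) → ℝ³`, all parallel to the plane
`N^⊥`, whose projections to `N^⊥` meet pairwise transversely at the single common point
which is the projection of each midpoint `a k`, and with `S₂` higher than `S₁`, `S₃`. -/
def IsModelTriple (a v : Fin 3 → E3) : Prop :=
  (∀ k, v k 2 = 0) ∧ (∀ k, v k ≠ 0) ∧
  pr12 (a 0) = pr12 (a 1) ∧ pr12 (a 1) = pr12 (a 2) ∧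
  (∀ j k, j ≠ k → cross2 (v j) (v k) ≠ 0) ∧
  a 0 2 < a 1 2 ∧ a 2 2 < a 1 2

/-- A model triple point of type `(←, s₁, s₂, s₃)`: `S₁` passes over `S₃`, and the signs
of the crossings `S₁–S₃`, `S₁–S₂`, `S₂–S₃` are `s₁, s₂, s₃` respectively. -/
def ModelLeft (a v : Fin 3 → E3) (s1 s2 s3 : ℝ) : Prop :=
  IsModelTriple a v ∧ a 2 2 < a 0 2 ∧
  s1 = Real.sign (cross2 (v 0) (v 2)) ∧
  s2 = Real.sign (cross2 (v 1) (v 0)) ∧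
  s3 = Real.sign (cross2 (v 1) (v 2))

/-- A model triple point of type `(→, s₁, s₂, s₃)`: `S₃` passes over `S₁`, and the signs
of the crossings `S₁–S₃`, `S₁–S₂`, `S₂–S₃` are `s₁, s₂, s₃` respectively. -/
def ModelRight (a v : Fin 3 → E3) (s1 s2 s3 : ℝ) : Prop :=
  IsModelTriple a v ∧ a 0 2 < a 2 2 ∧
  s1 = Real.sign (cross2 (v 2) (v 0)) ∧
  s2 = Real.sign (cross2 (v 1) (v 0)) ∧
  s3 = Real.sign (cross2 (v 1) (v 2))

/-- The cube `(-δ, δ)⁴ ⊆ ℝ⁴`. -/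
def cube4 (δ : ℝ) : Set E4 := {x | ∀ i, |x i| < δ}

/-- The model configuration space integral `I_X^{X′₁}`: the two points `t₁ < t₂` lie on
`S₁`, the point `t₃` on `S₂` and the point `t₄` on `S₃`; the maps are
`h₁₃ = unit (f₂(t₃) - f₁(t₁))` and `h₄₂ = unit (f₁(t₂) - f₃(t₄))`. -/
def IX1model (a v : Fin 3 → E3) (δ : ℝ) (g : E3 → ℝ) : ℝ :=
  ∫ x in cube4 δ ∩ {x : E4 | x 0 < x 1},
    wedge22 g (fun x => unitv (seg (a 1) (v 1) (x 2) - seg (a 0) (v 0) (x 0)))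
      (fun x => unitv (seg (a 0) (v 0) (x 1) - seg (a 2) (v 2) (x 3))) x

/-- The model configuration space integral `I_X^{X′₂}` (`(X′₂, l)` for a model of type
`←`, `(X′₂, r)` for a model of type `→`): the two points `t₂ < t₃` lie on `S₂`, the
point `t₁` on `S₁` and the point `t₄` on `S₃`; the maps are
`h₁₃ = unit (f₂(t₃) - f₁(t₁))` and `h₄₂ = unit (f₂(t₂) - f₃(t₄))`. -/
def IX2model (a v : Fin 3 → E3) (δ : ℝ) (g : E3 → ℝ) : ℝ :=
  ∫ x in cube4 δ ∩ {x : E4 | x 1 < x 2},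
    wedge22 g (fun x => unitv (seg (a 1) (v 1) (x 2) - seg (a 0) (v 0) (x 0)))
      (fun x => unitv (seg (a 1) (v 1) (x 1) - seg (a 2) (v 2) (x 3))) x

/-- The model configuration space integral `I_X^{X′₃}`: the two points `t₃ < t₄` lie on
`S₃`, the point `t₁` on `S₁` and the point `t₂` on `S₂`; the maps are
`h₁₃ = unit (f₃(t₃) - f₁(t₁))` and `h₄₂ = unit (f₂(t₂) - f₃(t₄))`. -/
def IX3model (a v : Fin 3 → E3) (δ : ℝ) (g : E3 → ℝ) : ℝ :=
  ∫ x in cube4 δ ∩ {x : E4 | x 2 < x 3},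
    wedge22 g (fun x => unitv (seg (a 2) (v 2) (x 2) - seg (a 0) (v 0) (x 0)))
      (fun x => unitv (seg (a 1) (v 1) (x 1) - seg (a 2) (v 2) (x 3))) x

/-- The model `Y`-integral `I_Y^{s₁,s₂,s₃}` over `(-δ,δ)³ × ℝ³`: the point `t_k` lies on
`S_k` and `x₄ ∈ ℝ³` is free; the maps are `h₁₄ = unit (x₄ - f₁(t₁))`,
`h₄₂ = unit (f₂(t₂) - x₄)` and `h₃₄ = unit (x₄ - f₃(t₃))`. -/
def IYmodel (a v : Fin 3 → E3) (δ : ℝ) (g : E3 → ℝ) : ℝ :=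
  ∫ x in {x : E6 | |x 0| < δ ∧ |x 1| < δ ∧ |x 2| < δ ∧
      ptY x ≠ seg (a 0) (v 0) (x 0) ∧ ptY x ≠ seg (a 1) (v 1) (x 1) ∧
      ptY x ≠ seg (a 2) (v 2) (x 2)},
    wedge222 g (fun x => unitv (ptY x - seg (a 0) (v 0) (x 0)))
      (fun x => unitv (seg (a 1) (v 1) (x 1) - ptY x))
      (fun x => unitv (ptY x - seg (a 2) (v 2) (x 2))) x

/-- Near every (triple or higher) multiple point of the diagram, the strands of the long
knot `f` are straight segments parallel to the plane `N^⊥`. -/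
def StraightNearMultipleK (f : ℝ → E3) : Prop :=
  ∀ t u v : ℝ, t ≠ u → u ≠ v → t ≠ v →
    pr12 (f t) = pr12 (f u) → pr12 (f u) = pr12 (f v) →
    ∃ δ > (0 : ℝ), ∃ w : E3, w 2 = 0 ∧ ∀ s : ℝ, |s - t| < δ → f s = f t + (s - t) • w

/-- Near every (triple or higher) multiple point of the diagram, the strands of the long
link `f` are straight segments parallel to the plane `N^⊥`. -/
def StraightNearMultipleL (f : Fin 3 → ℝ → E3) : Prop :=
  ∀ (i j k : Fin 3) (t u v : ℝ), (i, t) ≠ (j, u) → (j, u) ≠ (k, v) → (i, t) ≠ (k, v) →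
    pr12 (f i t) = pr12 (f j u) → pr12 (f j u) = pr12 (f k v) →
    ∃ δ > (0 : ℝ), ∃ w : E3, w 2 = 0 ∧ ∀ s : ℝ, |s - t| < δ → f i s = f i t + (s - t) • w

/-! ### Closed 2-component links and the linking number -/

/-- A smooth loop in `ℝ³`, parametrized with period 1 and injective on a period. -/
def IsLoop (f : ℝ → E3) : Prop :=
  ContDiff ℝ (⊤ : ℕ∞) f ∧ (∀ t, f (t + 1) = f t) ∧ (∀ t, deriv f t ≠ 0) ∧
    ∀ s t : ℝ, f s = f t → ∃ n : ℤ, t - s = n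

/-- The diagram of the 2-component link `(f 0, f 1)` has only transverse double points. -/
def OnlyDouble2 (f : Fin 2 → ℝ → E3) : Prop :=
  (∀ i j s t, f i s ≠ f j t → pr12 (f i s) = pr12 (f j t) →
      cross2 (deriv (f i) s) (deriv (f j) t) ≠ 0) ∧
  ∀ i j k s t u, f i s ≠ f j t → f j t ≠ f k u → f i s ≠ f k u →
    pr12 (f i s) = pr12 (f j t) → pr12 (f j t) = pr12 (f k u) → False

/-- The crossings of the diagram at which `f₂` passes over `f₁` (one parameter period). -/
def Crossing12 (f₁ f₂ : ℝ → E3) : Set (ℝ × ℝ) :=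
  {p | p.1 ∈ Ico (0 : ℝ) 1 ∧ p.2 ∈ Ico (0 : ℝ) 1 ∧
    pr12 (f₁ p.1) = pr12 (f₂ p.2) ∧ pr3 (f₁ p.1) < pr3 (f₂ p.2)}

/-- The sum of the signs of the crossings of the diagram at which `f₂` passes over `f₁`;
this is the linking number `lk(f₁, f₂)`, i.e. the mapping degree of
`h : S¹ × S¹ → S²`. -/
def lkSum (f₁ f₂ : ℝ → E3) : ℝ :=
  ∑ᶠ p ∈ Crossing12 f₁ f₂, Real.sign (cross2 (deriv f₂ p.2) (deriv f₁ p.1))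

/-- The fundamental domain `[0,1) × [0,1)` of `S¹ × S¹`. -/
def sq01 : Set E2 := {x | x 0 ∈ Ico (0 : ℝ) 1 ∧ x 1 ∈ Ico (0 : ℝ) 1}

/-- `∫_{S¹×S¹} h*η` for `h(x₁,x₂) = unit (f₂(x₂) - f₁(x₁))`. -/
def lkIntegral (f₁ f₂ : ℝ → E3) (g : E3 → ℝ) : ℝ :=
  ∫ x in sq01, form2 g (fun x : E2 => unitv (f₂ (x 1) - f₁ (x 0))) x 0 1

/-!
For a single crossing, the direction from a point of the lower segment to a point of the upper one
is, in the affine chart `z = 1` of the upper hemisphere, a linear function of the two parameters.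
The pullback of `η` is therefore the pullback of an even density on `ℝ²` of total integral `1` by an
invertible linear map `T`, and its integral is the sign of `det T`, the sign of the crossing. If `η`
is concentrated near `N`, then this pullback vanishes outside the parameter square.

The integrand of each `I_X` is the product of two such densities in separate pairs of parameters.
It is even on `ℝ⁴`, so the half-space `x_i < x_j` carries half of the product of the two signs.
-/

theorem exists_pos_forall_of_eventually_nhdsGT {P : ℝ → Prop} (h : ∀ᶠ ε in 𝓝[>] 0, P ε) :
    ∃ ε₀ > (0 : ℝ), ∀ ε, 0 < ε → ε < ε₀ → P ε := by
  obtain ⟨ε₀, hε₀, hP⟩ := (nhdsGT_basis (0 : ℝ)).eventually_iff.1 h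
  exact ⟨ε₀, hε₀, fun ε h0 hlt ↦ hP ⟨h0, hlt⟩⟩

theorem setIntegral_halfSpace_of_even {E G : Type*} [NormedAddCommGroup E] [NormedSpace ℝ E]
    [FiniteDimensional ℝ E] [MeasurableSpace E] [BorelSpace E] [NormedAddCommGroup G]
    [NormedSpace ℝ G] (μ : Measure E) [μ.IsAddHaarMeasure] {Φ : E → G} (hΦ : Function.Even Φ)
    {ℓ : E →ₗ[ℝ] ℝ} (hℓ : ℓ ≠ 0) :
    ∫ x in {x | 0 < ℓ x}, Φ x ∂μ = (2⁻¹ : ℝ) • ∫ x, Φ x ∂μ := by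
  have hmeas_neg : MeasurableSet {x | ℓ x < 0} :=
    measurableSet_lt ℓ.continuous_of_finiteDimensional.measurable measurable_const
  have hdisj : Disjoint {x | 0 < ℓ x} {x | ℓ x < 0} :=
    Set.disjoint_left.2 fun x (h : 0 < ℓ x) h' ↦ h.not_gt h'
  have hcover : ({x | 0 < ℓ x} ∪ {x | ℓ x < 0} : Set E) =ᵐ[μ] univ := by
    have hker : μ (LinearMap.ker ℓ) = 0 :=
      Measure.addHaar_submodule μ _ (by simpa [LinearMap.ker_eq_top] using hℓ)
    refine eventuallyEq_univ.2 (measure_mono_null (fun x hx ↦ ?_) hker)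
    simpa [not_or, le_antisymm_iff] using hx
  have hemb := (Homeomorph.neg E).measurableEmbedding
  have hpre : (Homeomorph.neg E) ⁻¹' {x | 0 < ℓ x} = {x | ℓ x < 0} := by ext; simp
  have hint : ∫ x in {x | ℓ x < 0}, Φ x ∂μ = ∫ x in {x | 0 < ℓ x}, Φ x ∂μ := by
    rw [← (Measure.measurePreserving_neg μ).setIntegral_preimage_emb hemb, ← hpre]
    simp [hΦ _]
  have hiff : IntegrableOn Φ {x | ℓ x < 0} μ ↔ IntegrableOn Φ {x | 0 < ℓ x} μ := by
    have hcomp : Φ ∘ Homeomorph.neg E = Φ := funext hΦ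
    rw [← (Measure.measurePreserving_neg μ).integrableOn_comp_preimage
      (s := {x | 0 < ℓ x}) hemb, ← hpre]
    exact iff_of_eq (congrArg (IntegrableOn · _ μ) hcomp.symm)
  by_cases h : IntegrableOn Φ {x | 0 < ℓ x} μ
  · rw [← setIntegral_univ (f := Φ) (μ := μ), ← setIntegral_congr_set hcover,
      setIntegral_union hdisj hmeas_neg h (hiff.2 h), hint, ← two_smul ℝ,
      inv_smul_smul₀ two_ne_zero]
  · rw [integral_undef h, integral_undef, smul_zero]
    exact fun hΦ ↦ h hΦ.integrableOn

theorem integral_det_smul_comp {E G : Type*} [NormedAddCommGroup E] [NormedSpace ℝ E]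
    [FiniteDimensional ℝ E] [MeasurableSpace E] [BorelSpace E] [NormedAddCommGroup G]
    [NormedSpace ℝ G] (μ : Measure E) [μ.IsAddHaarMeasure] {T : E →ₗ[ℝ] E}
    (hT : LinearMap.det T ≠ 0) (f : E → G) :
    ∫ x, LinearMap.det T • f (T x) ∂μ = Real.sign (LinearMap.det T) • ∫ x, f x ∂μ := by
  have hemb : MeasurableEmbedding T :=
    (LinearMap.equivOfDetNeZero T hT).toContinuousLinearEquiv.toHomeomorph.measurableEmbedding
  rw [integral_smul, ← hemb.integral_map, Measure.map_linearMap_addHaar_eq_smul_addHaar μ hT,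
    integral_smul_measure, ENNReal.toReal_ofReal (abs_nonneg _), smul_smul]
  congr 1
  rcases hT.lt_or_gt with hneg | hpos
  · rw [Real.sign_of_neg hneg, abs_of_neg (inv_lt_zero.2 hneg), mul_neg, mul_inv_cancel₀ hT]
  · rw [Real.sign_of_pos hpos, abs_of_pos (inv_pos.2 hpos), mul_inv_cancel₀ hT]

theorem exists_forall_norm_lt_of_det_ne_zero {E : Type*} [NormedAddCommGroup E] [NormedSpace ℝ E]
    [FiniteDimensional ℝ E] {T : E →ₗ[ℝ] E} (hT : LinearMap.det T ≠ 0) {δ : ℝ} (hδ : 0 < δ) :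
    ∃ r > 0, ∀ x, ‖T x‖ < r → ‖x‖ < δ := by
  have hcont : ContinuousAt (LinearMap.equivOfDetNeZero T hT).symm 0 :=
    (LinearMap.equivOfDetNeZero T hT).symm.toLinearMap.continuous_of_finiteDimensional.continuousAt
  obtain ⟨r, hr, hball⟩ := Metric.continuousAt_iff.1 hcont δ hδ
  refine ⟨r, hr, fun x hx ↦ ?_⟩
  have hpre : (LinearMap.equivOfDetNeZero T hT).symm (T x) = x :=
    (LinearMap.equivOfDetNeZero T hT).symm_apply_apply x
  simpa [hpre] using hball (x := T x) (by simpa using hx)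

theorem setIntegral_coord_lt {n : ℕ} {i j : Fin n} (hij : i ≠ j)
    {Φ : EuclideanSpace ℝ (Fin n) → ℝ} (hΦ : Function.Even Φ) :
    ∫ x in {x | x i < x j}, Φ x = (∫ x, Φ x) / 2 := by
  let ℓ : EuclideanSpace ℝ (Fin n) →ₗ[ℝ] ℝ :=
    (EuclideanSpace.proj j - EuclideanSpace.proj i : EuclideanSpace ℝ (Fin n) →L[ℝ] ℝ)
  have hℓ : ℓ ≠ 0 := fun h ↦ by
    simpa [ℓ, hij] using LinearMap.congr_fun h (EuclideanSpace.single j 1)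
  rw [div_eq_inv_mul, ← smul_eq_mul, ← setIntegral_halfSpace_of_even volume hΦ hℓ]
  simp [ℓ, sub_pos]

theorem lintegral_Ioo_pow (d : ℕ) {a : ℝ} (ha : 0 ≤ a) :
    ∫⁻ z in Ioo 0 a, ENNReal.ofReal (z ^ d) = ENNReal.ofReal (a ^ (d + 1) / (d + 1)) := by
  rw [Measure.restrict_congr_set Ioo_ae_eq_Ioc, ← ofReal_integral_eq_lintegral_ofReal,
    ← intervalIntegral.integral_of_le ha, integral_pow]
  · simp
  · exact (intervalIntegral.intervalIntegrable_pow d).1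
  · filter_upwards [ae_restrict_mem measurableSet_Ioc] with z hz using pow_nonneg hz.1.le d

namespace GnomonicProjection

open scoped Pointwise

variable {F E : Type*} [NormedAddCommGroup F] [NormedSpace ℝ F]
  [NormedAddCommGroup E] [NormedSpace ℝ E]

/-- The central projection from `0` of the affine hyperplane `F × {1}`, transported to `E` by the
coordinates `L`, to the unit sphere of `E`; it parametrizes an open hemisphere by `F`. -/
def gnomonicPoint (L : (F × ℝ) ≃L[ℝ] E) (u : F) : Metric.sphere (0 : E) 1 :=
  ⟨‖L (u, 1)‖⁻¹ • L (u, 1), by simp [norm_smul]⟩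

theorem smul_gnomonicPoint (L : (F × ℝ) ≃L[ℝ] E) (r : ℝ) (u : F) :
    r • (gnomonicPoint L u : E) = L ((r * ‖L (u, 1)‖⁻¹) • u, r * ‖L (u, 1)‖⁻¹) := by
  simp only [gnomonicPoint, smul_smul, ← map_smul, Prod.smul_mk, smul_eq_mul, mul_one]

theorem gnomonicPoint_injective (L : (F × ℝ) ≃L[ℝ] E) :
    Function.Injective (gnomonicPoint L) := by
  intro u v huv
  have hval := congrArg (fun w : Metric.sphere (0 : E) 1 ↦ (1 : ℝ) • (w : E)) huv
  simp only [smul_gnomonicPoint, one_mul, EmbeddingLike.apply_eq_iff_eq, Prod.mk.injEq] at hval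
  rw [← hval.2] at hval
  exact smul_right_injective F (by simp : ‖L (u, 1)‖⁻¹ ≠ 0) hval.1

theorem continuous_gnomonicPoint (L : (F × ℝ) ≃L[ℝ] E) : Continuous (gnomonicPoint L) := by
  have hL : Continuous fun u : F ↦ L (u, 1) := by fun_prop
  exact ((hL.norm.inv₀ fun u ↦ by simp).smul hL).subtype_mk _

theorem mem_range_gnomonicPoint (L : (F × ℝ) ≃L[ℝ] E) {v : Metric.sphere (0 : E) 1}
    (hv : 0 < (L.symm v).2) : v ∈ range (gnomonicPoint L) := by
  obtain ⟨⟨u, z⟩, huz⟩ := L.surjective (v : E)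
  have hz : 0 < z := by simpa [← huz] using hv
  have hL : L (z⁻¹ • u, 1) = z⁻¹ • (v : E) := by
    simp [← huz, ← map_smul, hz.ne']
  refine ⟨z⁻¹ • u, Subtype.ext ?_⟩
  simp only [gnomonicPoint, hL]
  simp [norm_smul, abs_of_pos hz, smul_smul, hz.ne']

/-- The part inside the open unit ball of the open cone with apex `0` over the central projection
of `s`, written in the form in which it enters `Measure.toSphere_apply'`. -/
def truncatedCone (L : (F × ℝ) ≃L[ℝ] E) (s : Set F) : Set E :=
  Ioo (0 : ℝ) 1 • ((↑) '' (gnomonicPoint L '' s))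

theorem smul_mem_truncatedCone_iff (L : (F × ℝ) ≃L[ℝ] E) (s : Set F) (u : F) {z : ℝ}
    (hz : 0 < z) : L (z • u, z) ∈ truncatedCone L s ↔ u ∈ s ∧ z < ‖L (u, 1)‖⁻¹ := by
  have hn : 0 < ‖L (u, 1)‖ := by simp
  constructor
  · rintro ⟨r, hr, -, ⟨-, ⟨w, hw, rfl⟩, rfl⟩, hrw⟩
    simp only [smul_gnomonicPoint, EmbeddingLike.apply_eq_iff_eq, Prod.mk.injEq] at hrw
    obtain ⟨hrw, rfl⟩ := hrw
    obtain rfl : w = u := smul_right_injective F hz.ne' hrw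
    exact ⟨hw, mul_lt_of_lt_one_left (by simp) hr.2⟩
  · rintro ⟨hu, hlt⟩
    refine ⟨z * ‖L (u, 1)‖, ⟨by positivity, (lt_inv_mul_iff₀' hn).1 (by simpa using hlt)⟩, _,
      mem_image_of_mem _ (mem_image_of_mem _ hu), ?_⟩
    simp only [smul_gnomonicPoint, mul_inv_cancel_right₀ hn.ne']

theorem preimage_truncatedCone_subset (L : (F × ℝ) ≃L[ℝ] E) (s : Set F) :
    L ⁻¹' truncatedCone L s ⊆ univ ×ˢ Ioi 0 := by
  rintro p ⟨r, hr, -, ⟨-, ⟨w, -, rfl⟩, rfl⟩, hrw⟩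
  simp only [smul_gnomonicPoint, EmbeddingLike.apply_eq_iff_eq] at hrw
  exact ⟨mem_univ _, hrw ▸ mul_pos hr.1 (by simp)⟩

theorem preimage_truncatedCone (L : (F × ℝ) ≃L[ℝ] E) (s : Set F) :
    L ⁻¹' truncatedCone L s =
      {p | 0 < p.2 ∧ p.2⁻¹ • p.1 ∈ s ∧ p.2 < ‖L (p.2⁻¹ • p.1, 1)‖⁻¹} := by
  ext p
  by_cases hp : 0 < p.2
  · simpa only [smul_inv_smul₀ hp.ne', mem_preimage, mem_ofPred_eq, hp, true_and]
      using smul_mem_truncatedCone_iff L s (p.2⁻¹ • p.1) hp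
  · exact iff_of_false (fun h ↦ hp (preimage_truncatedCone_subset L s h).2) fun h ↦ hp h.1

theorem lintegral_fiber_truncatedCone (L : (F × ℝ) ≃L[ℝ] E) (s : Set F) (d : ℕ) (u : F) :
    ∫⁻ z in Ioi (0 : ℝ), ENNReal.ofReal (z ^ d) *
        (L ⁻¹' truncatedCone L s).indicator 1 (z • u, z) =
      s.indicator (fun u ↦ ENNReal.ofReal (‖L (u, 1)‖⁻¹ ^ (d + 1) / (d + 1))) u := by
  by_cases hu : u ∈ s
  · rw [indicator_of_mem hu, ← lintegral_Ioo_pow _ (by positivity), ← Ioi_inter_Iio, inter_comm,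
      ← setLIntegral_indicator measurableSet_Iio]
    refine setLIntegral_congr_fun measurableSet_Ioi fun z hz ↦ ?_
    by_cases hzu : z < ‖L (u, 1)‖⁻¹ <;>
      simp [indicator, smul_mem_truncatedCone_iff L s u hz, hu, hzu]
  · rw [indicator_of_notMem hu]
    refine setLIntegral_eq_zero measurableSet_Ioi fun z hz ↦ ?_
    simp [indicator, smul_mem_truncatedCone_iff L s u hz, hu]

variable [FiniteDimensional ℝ F] [MeasurableSpace F] [BorelSpace F]

theorem lintegral_upperHalfSpace_eq (ν : Measure F) [ν.IsAddHaarMeasure] {f : F × ℝ → ENNReal}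
    (hf : Measurable f) :
    ∫⁻ p in univ ×ˢ Ioi 0, f p ∂(ν.prod volume) =
      ∫⁻ u, (∫⁻ z in Ioi (0 : ℝ), ENNReal.ofReal (z ^ Module.finrank ℝ F) * f (z • u, z)) ∂ν := by
  have hslice (z : ℝ) (hz : z ∈ Ioi 0) : ∫⁻ y, f (y, z) ∂ν =
      ∫⁻ u, ENNReal.ofReal (z ^ Module.finrank ℝ F) * f (z • u, z) ∂ν := by
    have hz' : 0 < z ^ Module.finrank ℝ F := pow_pos hz _
    rw [lintegral_const_mul _ (by fun_prop),
      ← lintegral_map (f := fun y ↦ f (y, z)) (by fun_prop)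
        (by fun_prop : Measurable (z • · : F → F)),
      Measure.map_addHaar_smul ν (ne_of_gt hz), lintegral_smul_measure, smul_eq_mul, ← mul_assoc,
      ← ENNReal.ofReal_mul hz'.le, abs_of_pos (inv_pos.2 hz'), mul_inv_cancel₀ hz'.ne',
      ENNReal.ofReal_one, one_mul]
  rw [← Measure.prod_restrict, Measure.restrict_univ, lintegral_prod_symm _ hf.aemeasurable,
    setLIntegral_congr_fun measurableSet_Ioi hslice, lintegral_lintegral_swap]
  fun_prop

variable [MeasurableSpace E] [BorelSpace E]

theorem measurableEmbedding_gnomonicPoint (L : (F × ℝ) ≃L[ℝ] E) :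
    MeasurableEmbedding (gnomonicPoint L) := by
  have : ProperSpace F := FiniteDimensional.proper_real F
  have : SecondCountableTopology E := L.symm.toHomeomorph.secondCountableTopology
  exact (continuous_gnomonicPoint L).measurableEmbedding (gnomonicPoint_injective L)

theorem measure_truncatedCone {μ : Measure E} {ν : Measure F} [ν.IsAddHaarMeasure]
    (L : (F × ℝ) ≃L[ℝ] E) (hL : MeasurePreserving L (ν.prod volume) μ) {s : Set F}
    (hs : MeasurableSet s) :
    μ (truncatedCone L s) =
      ∫⁻ u in s, ENNReal.ofReal (‖L (u, 1)‖⁻¹ ^ (Module.finrank ℝ F + 1) /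
        (Module.finrank ℝ F + 1)) ∂ν := by
  have hmeas : MeasurableSet (L ⁻¹' truncatedCone L s) := by
    rw [preimage_truncatedCone]
    measurability
  rw [← hL.measure_preimage_emb L.toHomeomorph.measurableEmbedding, ← lintegral_indicator hs]
  simp only [← lintegral_fiber_truncatedCone]
  rw [← lintegral_upperHalfSpace_eq ν (measurable_one.indicator hmeas),
    lintegral_indicator_one hmeas, Measure.restrict_apply hmeas,
    inter_eq_left.2 (preimage_truncatedCone_subset L s)]

theorem comap_gnomonicPoint_toSphere {μ : Measure E} {ν : Measure F} [ν.IsAddHaarMeasure]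
    (L : (F × ℝ) ≃L[ℝ] E) (hL : MeasurePreserving L (ν.prod volume) μ) :
    μ.toSphere.comap (gnomonicPoint L) =
      ν.withDensity fun u ↦ ENNReal.ofReal (‖L (u, 1)‖⁻¹ ^ (Module.finrank ℝ F + 1)) := by
  have hemb := measurableEmbedding_gnomonicPoint L
  have hdim : Module.finrank ℝ E = Module.finrank ℝ F + 1 := by
    rw [← L.toLinearEquiv.finrank_eq, Module.finrank_prod, Module.finrank_self]
  ext s hs
  rw [hemb.comap_apply, Measure.toSphere_apply' _ (hemb.measurableSet_image.2 hs),
    ← truncatedCone, measure_truncatedCone L hL hs, withDensity_apply _ hs, hdim,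
    ← lintegral_const_mul' _ _ (by simp)]
  refine lintegral_congr fun u ↦ ?_
  rw [← ENNReal.ofReal_natCast, ← ENNReal.ofReal_mul (by positivity)]
  push_cast
  rw [mul_div_cancel₀ _ (by positivity)]

theorem integral_toSphere_eq {μ : Measure E} {ν : Measure F} [ν.IsAddHaarMeasure]
    (L : (F × ℝ) ≃L[ℝ] E) (hL : MeasurePreserving L (ν.prod volume) μ) {G : Type*}
    [NormedAddCommGroup G] [NormedSpace ℝ G] (f : Metric.sphere (0 : E) 1 → G)
    (hf : ∀ v, f v ≠ 0 → 0 < (L.symm v).2) :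
    ∫ v, f v ∂μ.toSphere =
      ∫ u, ‖L (u, 1)‖⁻¹ ^ (Module.finrank ℝ F + 1) • f (gnomonicPoint L u) ∂ν := by
  have hemb := measurableEmbedding_gnomonicPoint L
  calc ∫ v, f v ∂μ.toSphere
      = ∫ v in range (gnomonicPoint L), f v ∂μ.toSphere :=
        (setIntegral_eq_integral_of_forall_compl_eq_zero fun v hv ↦
          of_not_not fun hne ↦ hv (mem_range_gnomonicPoint L (hf v hne))).symm
    _ = ∫ u, f (gnomonicPoint L u) ∂μ.toSphere.comap (gnomonicPoint L) := by
        rw [← hemb.map_comap, hemb.integral_map]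
    _ = ∫ u, ‖L (u, 1)‖⁻¹ ^ (Module.finrank ℝ F + 1) • f (gnomonicPoint L u) ∂ν := by
        rw [comap_gnomonicPoint_toSphere L hL, integral_withDensity_eq_integral_toReal_smul]
        · simp
        · fun_prop
        · exact ae_of_all _ fun _ ↦ ENNReal.ofReal_lt_top

end GnomonicProjection

/-- The value of the constant form `dx_k ∧ dx_l` on `(e_i, e_j)`; it is integer-valued so that sums
over permutations can be decided. -/
def dxWedge (k l i j : Fin 4) : ℤ :=
  (if k = i then 1 else 0) * (if l = j then 1 else 0) -
    (if l = i then 1 else 0) * (if k = j then 1 else 0)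

theorem sum_sign_mul_dxWedge :
    ∑ σ : Equiv.Perm (Fin 4),
      (Equiv.Perm.sign σ : ℤ) * dxWedge 0 2 (σ 0) (σ 1) * dxWedge 3 1 (σ 2) (σ 3) = 4 := by
  decide

theorem wedge22_eq_mul {g : E3 → ℝ} {h k : E4 → E3} {x : E4} {A B : ℝ}
    (hA : ∀ i j, form2 g h x i j = dxWedge 0 2 i j * A)
    (hB : ∀ i j, form2 g k x i j = dxWedge 3 1 i j * B) : wedge22 g h k x = A * B := by
  have hsum : ∑ σ : Equiv.Perm (Fin 4), ((Equiv.Perm.sign σ : ℤ) : ℝ) *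
      dxWedge 0 2 (σ 0) (σ 1) * dxWedge 3 1 (σ 2) (σ 3) = 4 := by
    exact_mod_cast sum_sign_mul_dxWedge
  calc wedge22 g h k x
      = 1 / 4 * ((∑ σ : Equiv.Perm (Fin 4), ((Equiv.Perm.sign σ : ℤ) : ℝ) *
          dxWedge 0 2 (σ 0) (σ 1) * dxWedge 3 1 (σ 2) (σ 3)) * (A * B)) := by
        simp only [wedge22, hA, hB, Finset.sum_mul]
        congr! 2
        ring
    _ = A * B := by rw [hsum]; ring

theorem det3_smul_sub_smul (w p q : E3) (a b c d : ℝ) :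
    det3 w (a • p - b • q) (c • p - d • q) = (b * c - a * d) * det3 w p q := by
  simp only [det3, PiLp.sub_apply, PiLp.smul_apply, smul_eq_mul]
  ring

theorem mk3_apply_zero (x y z : ℝ) : mk3 x y z 0 = x := rfl

theorem mk3_apply_one (x y z : ℝ) : mk3 x y z 1 = y := rfl

theorem mk3_apply_two (x y z : ℝ) : mk3 x y z 2 = z := rfl

/-- The coordinates `((x, y), z)` on `ℝ³ = N^⊥ × ℝ`. -/
def mk3Equiv : ((ℝ × ℝ) × ℝ) ≃L[ℝ] E3 :=
  LinearEquiv.toContinuousLinearEquiv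
    { toFun u := mk3 u.1.1 u.1.2 u.2
      invFun w := ((w 0, w 1), w 2)
      map_add' u v := by ext i; fin_cases i <;> rfl
      map_smul' r u := by ext i; fin_cases i <;> rfl
      left_inv u := rfl
      right_inv w := by ext i; fin_cases i <;> rfl }

theorem mk3Equiv_apply (u : (ℝ × ℝ) × ℝ) : mk3Equiv u = mk3 u.1.1 u.1.2 u.2 := rfl

theorem measurePreserving_mk3Equiv : MeasurePreserving mk3Equiv (volume.prod volume) volume := by
  let f : (ℝ × ℝ) × ℝ → Fin 3 → ℝ := fun u ↦ WithLp.ofLp (mk3Equiv u)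
  have hf : Measurable f := by fun_prop
  refine (PiLp.volume_preserving_toLp (Fin 3)).comp (g := WithLp.toLp 2) (f := f) ⟨hf, ?_⟩
  refine (Measure.pi_eq fun s hs ↦ ?_).symm
  have hpre : f ⁻¹' univ.pi s = (s 0 ×ˢ s 1) ×ˢ s 2 := by
    ext u
    simp [f, mk3Equiv_apply, Fin.forall_fin_succ, mk3, and_assoc]
  rw [Measure.map_apply hf (.univ_pi hs), hpre, Measure.prod_prod, Measure.volume_eq_prod,
    Measure.prod_prod, Fin.prod_univ_three]

/-- The coordinates `((x₀, x₂), (x₃, x₁))` on `ℝ⁴`, which pair the parameters of the two chords. -/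
def chordPairEquiv : ((ℝ × ℝ) × (ℝ × ℝ)) ≃L[ℝ] E4 :=
  LinearEquiv.toContinuousLinearEquiv
    { toFun u := !₂[u.1.1, u.2.2, u.1.2, u.2.1]
      invFun x := ((x 0, x 2), (x 3, x 1))
      map_add' u v := by ext i; fin_cases i <;> rfl
      map_smul' r u := by ext i; fin_cases i <;> rfl
      left_inv u := rfl
      right_inv x := by ext i; fin_cases i <;> rfl }

theorem chordPairEquiv_apply (u : (ℝ × ℝ) × (ℝ × ℝ)) :
    chordPairEquiv u = !₂[u.1.1, u.2.2, u.1.2, u.2.1] := rfl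

theorem measurePreserving_chordPairEquiv :
    MeasurePreserving chordPairEquiv (volume.prod volume) volume := by
  let f : (ℝ × ℝ) × (ℝ × ℝ) → Fin 4 → ℝ := fun u ↦ WithLp.ofLp (chordPairEquiv u)
  have hf : Measurable f := by fun_prop
  refine (PiLp.volume_preserving_toLp (Fin 4)).comp (g := WithLp.toLp 2) (f := f) ⟨hf, ?_⟩
  refine (Measure.pi_eq fun s hs ↦ ?_).symm
  have hpre : f ⁻¹' univ.pi s = (s 0 ×ˢ s 2) ×ˢ (s 3 ×ˢ s 1) := by
    ext u
    have hmem : u ∈ f ⁻¹' univ.pi s ↔ u.1.1 ∈ s 0 ∧ u.2.2 ∈ s 1 ∧ u.1.2 ∈ s 2 ∧ u.2.1 ∈ s 3 := by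
      simp [f, chordPairEquiv_apply, Fin.forall_fin_succ]
    rw [hmem, mem_prod, mem_prod, mem_prod]
    tauto
  rw [Measure.map_apply hf (.univ_pi hs), hpre, Measure.prod_prod, Measure.volume_eq_prod,
    Measure.prod_prod, Measure.prod_prod, Fin.prod_univ_four]
  ring

theorem integral_mul_chordPair (A B : ℝ × ℝ → ℝ) :
    ∫ x : E4, A (x 0, x 2) * B (x 3, x 1) = (∫ u, A u) * ∫ u, B u := by
  rw [← integral_prod_mul, ← measurePreserving_chordPairEquiv.integral_comp
    chordPairEquiv.toHomeomorph.measurableEmbedding]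
  simp [chordPairEquiv_apply]

theorem unitv_smul {c : ℝ} (hc : 0 < c) (w : E3) : unitv (c • w) = unitv w := by
  rw [unitv, unitv, norm_smul, Real.norm_of_nonneg hc.le, smul_smul, mul_inv_rev, mul_assoc,
    inv_mul_cancel₀ hc.ne', mul_one]

theorem norm_unitv {w : E3} (hw : w ≠ 0) : ‖unitv w‖ = 1 := by
  rw [unitv, norm_smul, norm_inv, norm_norm, inv_mul_cancel₀ (norm_ne_zero_iff.2 hw)]

theorem ne_zero_of_apply_two_pos {w : E3} (hw : 0 < w 2) : w ≠ 0 := by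
  rintro rfl
  simp at hw

theorem mk3_one_ne_zero (x y : ℝ) : mk3 x y 1 ≠ 0 :=
  ne_zero_of_apply_two_pos (by simp [mk3_apply_two])

section Derivative

variable {n : ℕ} {h : EuclideanSpace ℝ (Fin n) → E3} {h' : EuclideanSpace ℝ (Fin n) →L[ℝ] E3}
  {x : EuclideanSpace ℝ (Fin n)}

theorem exists_pdv_unitv_eq (hh : HasFDerivAt h h' x) (hx : h x ≠ 0) (i : Fin n) :
    ∃ r : ℝ, pdv (fun y ↦ unitv (h y)) i x =
      ‖h x‖⁻¹ • h' (EuclideanSpace.single i 1) + r • h x := by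
  have hinv : DifferentiableAt ℝ (fun y ↦ ‖h y‖⁻¹) x :=
    (hh.differentiableAt.norm ℝ hx).inv (norm_ne_zero_iff.2 hx)
  refine ⟨fderiv ℝ (fun y ↦ ‖h y‖⁻¹) x (EuclideanSpace.single i 1), ?_⟩
  unfold pdv unitv
  rw [(hinv.hasFDerivAt.fun_smul hh).fderiv]
  simp

theorem form2_unitv (g : E3 → ℝ) (hh : HasFDerivAt h h' x) (hx : h x ≠ 0) (i j : Fin n) :
    form2 g (fun y ↦ unitv (h y)) x i j = ‖h x‖⁻¹ ^ 3 * g (unitv (h x)) *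
      det3 (h x) (h' (EuclideanSpace.single i 1)) (h' (EuclideanSpace.single j 1)) := by
  obtain ⟨r, hr⟩ := exists_pdv_unitv_eq hh hx i
  obtain ⟨s, hs⟩ := exists_pdv_unitv_eq hh hx j
  rw [form2, hr, hs]
  simp only [det3, unitv, PiLp.add_apply, PiLp.smul_apply, smul_eq_mul]
  ring

end Derivative

/-- The density of `η = g · (area form)` in the affine chart `u ↦ unitv (u, 1)` of the upper
hemisphere, with respect to the area of the plane. -/
def gnomonicDensity (g : E3 → ℝ) (u : ℝ × ℝ) : ℝ :=
  ‖mk3 u.1 u.2 1‖⁻¹ ^ 3 * g (unitv (mk3 u.1 u.2 1))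

namespace IsEtaForm

variable {ε : ℝ} {g : E3 → ℝ}

theorem abs_lt_of_unitv_ne_zero (hg : IsEtaForm ε g) (hε : ε < 1 / 2) {w : E3} (hw : w ≠ 0)
    (hgw : g (unitv w) ≠ 0) : 0 < w 2 ∧ |w 0| < 2 * ε * w 2 ∧ |w 1| < 2 * ε * w 2 := by
  have hnorm : 0 < ‖w‖ := norm_pos_iff.2 hw
  have hnear : ‖unitv w - NP‖ < ε := hg.2.1 _ (norm_unitv hw) hgw
  have hcoord (i : Fin 3) : |(unitv w - NP) i| < ε :=
    (PiLp.norm_apply_le (unitv w - NP) i).trans_lt hnear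
  have h0 := hcoord 0
  have h1 := hcoord 1
  have h2 := (abs_lt.1 (hcoord 2)).1
  simp only [unitv, NP, PiLp.sub_apply, PiLp.smul_apply, mk3_apply_zero, mk3_apply_one,
    mk3_apply_two, sub_zero, smul_eq_mul, abs_mul, abs_inv, abs_norm,
    inv_mul_lt_iff₀ hnorm] at h0 h1 h2
  have hε0 : 0 < ε := (norm_nonneg _).trans_lt hnear
  have hhalf : ‖w‖ * (1 / 2) < w 2 := (lt_inv_mul_iff₀ hnorm).1 (by linarith)
  exact ⟨by linarith, by nlinarith, by nlinarith⟩

theorem norm_lt_of_gnomonicDensity_ne_zero (hg : IsEtaForm ε g) (hε : ε < 1 / 2) {u : ℝ × ℝ}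
    (hu : gnomonicDensity g u ≠ 0) : ‖u‖ < 2 * ε := by
  obtain ⟨-, h0, h1⟩ :=
    hg.abs_lt_of_unitv_ne_zero hε (mk3_one_ne_zero u.1 u.2) (right_ne_zero_of_mul hu)
  simp only [mk3_apply_zero, mk3_apply_one, mk3_apply_two, mul_one] at h0 h1
  exact max_lt h0 h1

theorem gnomonicDensity_even (hg : IsEtaForm ε g) : Function.Even (gnomonicDensity g) := by
  intro u
  have hrot : mk3 (-u.1) (-u.2) 1 = act2 (-1) (mk3 u.1 u.2 1) := by
    simp [act2, mk3_apply_zero, mk3_apply_one, mk3_apply_two]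
  have hnorm : ‖mk3 (-u.1) (-u.2) 1‖ = ‖mk3 u.1 u.2 1‖ := by
    simp [EuclideanSpace.norm_eq, Fin.sum_univ_three, mk3_apply_zero, mk3_apply_one,
      mk3_apply_two]
  have hunit : unitv (mk3 (-u.1) (-u.2) 1) = act2 (-1) (unitv (mk3 u.1 u.2 1)) := by
    rw [unitv, hnorm, hrot, unitv]
    ext i
    fin_cases i <;> simp [act2, mk3]
  simp only [gnomonicDensity, Prod.fst_neg, Prod.snd_neg, hnorm, hunit]
  rw [hg.2.2.1 _ (by simp) _ (norm_unitv (mk3_one_ne_zero _ _))]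

theorem integral_gnomonicDensity (hg : IsEtaForm ε g) (hε : ε < 1 / 2) :
    ∫ u, gnomonicDensity g u = 1 := by
  have hpos (v : Metric.sphere (0 : E3) 1) (hv : g v ≠ 0) : 0 < (mk3Equiv.symm v).2 := by
    have hunit : unitv v = v := by simp [unitv]
    exact (hg.abs_lt_of_unitv_ne_zero hε (ne_zero_of_mem_unit_sphere v) (by rwa [hunit])).1
  calc ∫ u, gnomonicDensity g u
      = ∫ v : Metric.sphere (0 : E3) 1, g v ∂(volume : Measure E3).toSphere := by
        rw [GnomonicProjection.integral_toSphere_eq mk3Equiv measurePreserving_mk3Equiv _ hpos]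
        simp only [Module.finrank_prod, Module.finrank_self]
        rfl
    _ = 1 := hg.2.2.2

end IsEtaForm

/-- The segment `seg b p` passes over the segment `seg a q`: both are horizontal, their midpoints
`b` and `a` lie on a common vertical line with `b` above `a`, and their projections are
transverse. -/
structure CrossesOver (b p a q : E3) : Prop where
  over_horizontal : p 2 = 0
  under_horizontal : q 2 = 0
  pr12_eq : pr12 a = pr12 b
  lt : a 2 < b 2
  transverse : cross2 p q ≠ 0

/-- The direction from the point with parameter `x l` of the segment `seg a q` to the point with
parameter `x k` of the segment `seg b p`. -/
def segDirection (b p a q : E3) (k l : Fin 4) (x : E4) : E3 :=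
  unitv (seg b p (x k) - seg a q (x l))

/-- The linear map describing, in the affine chart `z = 1`, the direction from the point with
parameter `s` of `seg a q` to the point with parameter `t` of `seg b p`, as a function of
`(s, t)`. -/
def crossingMap (b p a q : E3) : ℝ × ℝ →ₗ[ℝ] ℝ × ℝ :=
  Matrix.toLin (Module.Basis.finTwoProd ℝ) (Module.Basis.finTwoProd ℝ)
    ((b 2 - a 2)⁻¹ • !![-q 0, p 0; -q 1, p 1])

theorem crossingMap_apply (b p a q : E3) (s t : ℝ) : crossingMap b p a q (s, t) =
    (b 2 - a 2)⁻¹ • (t * p 0 - s * q 0, t * p 1 - s * q 1) := by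
  simp only [crossingMap, map_smul, LinearMap.smul_apply, Matrix.toLin_finTwoProd_apply]
  congr 2 <;> ring

theorem det_crossingMap (b p a q : E3) :
    LinearMap.det (crossingMap b p a q) = cross2 p q / (b 2 - a 2) ^ 2 := by
  rw [crossingMap, LinearMap.det_toLin, Matrix.det_smul, Fintype.card_fin, Matrix.det_fin_two_of,
    cross2, div_eq_mul_inv, ← inv_pow]
  ring

/-- The pullback of `η = g · (area form)` under the direction map of a crossing is
`crossingDensity g b p a q (s, t) ds ∧ dt`, where `s` and `t` are the parameters of the under- and
of the over-strand. -/
def crossingDensity (g : E3 → ℝ) (b p a q : E3) (u : ℝ × ℝ) : ℝ :=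
  LinearMap.det (crossingMap b p a q) * gnomonicDensity g (crossingMap b p a q u)

theorem IsEtaForm.crossingDensity_even {ε : ℝ} {g : E3 → ℝ} (hg : IsEtaForm ε g)
    (b p a q : E3) : Function.Even (crossingDensity g b p a q) := fun u ↦ by
  simp only [crossingDensity, map_neg, hg.gnomonicDensity_even _]

theorem det3_of_horizontal (w : E3) {p q : E3} (hp : p 2 = 0) (hq : q 2 = 0) :
    det3 w p q = w 2 * cross2 p q := by
  simp only [det3, cross2, hp, hq]
  ring

namespace CrossesOver

variable {b p a q b' p' a' q' : E3}

theorem det_crossingMap_ne_zero (h : CrossesOver b p a q) :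
    LinearMap.det (crossingMap b p a q) ≠ 0 := by
  rw [det_crossingMap]
  exact div_ne_zero h.transverse (pow_ne_zero 2 (sub_pos.2 h.lt).ne')

theorem sign_det_crossingMap (h : CrossesOver b p a q) :
    Real.sign (LinearMap.det (crossingMap b p a q)) = Real.sign (cross2 p q) := by
  have hc : 0 < (b 2 - a 2) ^ 2 := pow_pos (sub_pos.2 h.lt) 2
  rw [det_crossingMap]
  rcases h.transverse.lt_or_gt with hneg | hpos
  · rw [Real.sign_of_neg hneg, Real.sign_of_neg (div_neg_of_neg_of_pos hneg hc)]
  · rw [Real.sign_of_pos hpos, Real.sign_of_pos (div_pos hpos hc)]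

theorem seg_sub_seg (h : CrossesOver b p a q) (s t : ℝ) :
    seg b p t - seg a q s = (b 2 - a 2) •
      mk3 (crossingMap b p a q (s, t)).1 (crossingMap b p a q (s, t)).2 1 := by
  have hc : b 2 - a 2 ≠ 0 := (sub_pos.2 h.lt).ne'
  have h0 : a 0 = b 0 := congrArg Prod.fst h.pr12_eq
  have h1 : a 1 = b 1 := congrArg Prod.snd h.pr12_eq
  rw [crossingMap_apply]
  ext i
  fin_cases i <;>
    simp [seg, mk3, h0, h1, h.over_horizontal, h.under_horizontal, mul_inv_cancel_left₀ hc]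

theorem form2_segDirection (h : CrossesOver b p a q) (g : E3 → ℝ) (k l : Fin 4) (x : E4)
    (i j : Fin 4) : form2 g (segDirection b p a q k l) x i j = dxWedge l k i j *
      crossingDensity g b p a q (x l, x k) := by
  have hc : 0 < b 2 - a 2 := sub_pos.2 h.lt
  have hderiv : HasFDerivAt (fun y : E4 ↦ seg b p (y k) - seg a q (y l))
      ((EuclideanSpace.proj k : E4 →L[ℝ] ℝ).smulRight p -
        (EuclideanSpace.proj l : E4 →L[ℝ] ℝ).smulRight q) x :=
    (((EuclideanSpace.proj k : E4 →L[ℝ] ℝ).smulRight p).hasFDerivAt.const_add b).sub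
      (((EuclideanSpace.proj l : E4 →L[ℝ] ℝ).smulRight q).hasFDerivAt.const_add a)
  have hne : seg b p (x k) - seg a q (x l) ≠ 0 := by
    rw [h.seg_sub_seg]
    exact smul_ne_zero hc.ne' (mk3_one_ne_zero _ _)
  have hform := form2_unitv g hderiv hne i j
  simp only [_root_.sub_apply, ContinuousLinearMap.smulRight_apply,
    PiLp.proj_apply, det3_smul_sub_smul, PiLp.single_apply,
    det3_of_horizontal _ h.over_horizontal h.under_horizontal] at hform
  unfold segDirection
  rw [hform, h.seg_sub_seg, unitv_smul hc, norm_smul, Real.norm_of_nonneg hc.le, crossingDensity,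
    det_crossingMap, gnomonicDensity]
  simp only [dxWedge, PiLp.smul_apply, mk3_apply_two, smul_eq_mul]
  push_cast
  field_simp

theorem integral_crossingDensity (h : CrossesOver b p a q) {ε : ℝ} {g : E3 → ℝ}
    (hg : IsEtaForm ε g) (hε : ε < 1 / 2) :
    ∫ u, crossingDensity g b p a q u = Real.sign (cross2 p q) := by
  simp only [crossingDensity, ← smul_eq_mul]
  rw [integral_det_smul_comp _ h.det_crossingMap_ne_zero, h.sign_det_crossingMap,
    hg.integral_gnomonicDensity hε, smul_eq_mul, mul_one]

theorem eventually_crossingDensity_support (h : CrossesOver b p a q) {δ : ℝ} (hδ : 0 < δ) :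
    ∀ᶠ ε in 𝓝[>] 0, ∀ g, IsEtaForm ε g → ∀ u, crossingDensity g b p a q u ≠ 0 → ‖u‖ < δ := by
  obtain ⟨r, hr, hsmall⟩ := exists_forall_norm_lt_of_det_ne_zero h.det_crossingMap_ne_zero hδ
  filter_upwards [Ioo_mem_nhdsGT (by positivity : 0 < min (1 / 2) (r / 2))] with ε hε g hg u hu
  obtain ⟨hε_half, hεr⟩ := lt_min_iff.1 hε.2
  exact hsmall u <|
    (hg.norm_lt_of_gnomonicDensity_ne_zero hε_half (right_ne_zero_of_mul hu)).trans (by linarith)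

theorem wedge22_segDirection (h : CrossesOver b p a q) (h' : CrossesOver b' p' a' q') (g : E3 → ℝ)
    (x : E4) : wedge22 g (segDirection b p a q 2 0) (segDirection b' p' a' q' 1 3) x =
      crossingDensity g b p a q (x 0, x 2) * crossingDensity g b' p' a' q' (x 3, x 1) :=
  wedge22_eq_mul (h.form2_segDirection g 2 0 x) (h'.form2_segDirection g 1 3 x)

theorem eventually_setIntegral_wedge22 (h : CrossesOver b p a q) (h' : CrossesOver b' p' a' q')
    {i j : Fin 4} (hij : i ≠ j) {δ : ℝ} (hδ : 0 < δ) :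
    ∀ᶠ ε in 𝓝[>] 0, ∀ g, IsEtaForm ε g →
      ∫ x in cube4 δ ∩ {x | x i < x j},
          wedge22 g (segDirection b p a q 2 0) (segDirection b' p' a' q' 1 3) x =
        Real.sign (cross2 p q) * Real.sign (cross2 p' q') / 2 := by
  filter_upwards [h.eventually_crossingDensity_support hδ,
    h'.eventually_crossingDensity_support hδ, Ioo_mem_nhdsGT one_half_pos]
    with ε hsupp hsupp' hε g hg
  simp only [h.wedge22_segDirection h']
  set Φ : E4 → ℝ := fun x ↦
    crossingDensity g b p a q (x 0, x 2) * crossingDensity g b' p' a' q' (x 3, x 1) with hΦ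
  have heven : Function.Even Φ := fun x ↦ congrArg₂ (· * ·)
    (hg.crossingDensity_even b p a q (x 0, x 2)) (hg.crossingDensity_even b' p' a' q' (x 3, x 1))
  have hcube (x : E4) (hx : Φ x ≠ 0) : x ∈ cube4 δ := by
    have h02 := max_lt_iff.1 (hsupp g hg _ (left_ne_zero_of_mul hx))
    have h31 := max_lt_iff.1 (hsupp' g hg _ (right_ne_zero_of_mul hx))
    exact Fin.forall_fin_succ.2 ⟨h02.1, Fin.forall_fin_succ.2 ⟨h31.2,
      Fin.forall_fin_two.2 ⟨h02.2, h31.1⟩⟩⟩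
  calc ∫ x in cube4 δ ∩ {x | x i < x j}, Φ x
      = ∫ x in {x | x i < x j}, Φ x :=
        (setIntegral_eq_of_subset_of_forall_sdiff_eq_zero
          (measurableSet_lt (by fun_prop) (by fun_prop)) inter_subset_right
          fun x hx ↦ of_not_not fun hne ↦ hx.2 ⟨hcube x hne, hx.1⟩).symm
    _ = (∫ x, Φ x) / 2 := setIntegral_coord_lt hij heven
    _ = Real.sign (cross2 p q) * Real.sign (cross2 p' q') / 2 := by
        rw [hΦ, integral_mul_chordPair, h.integral_crossingDensity hg hε.2,
          h'.integral_crossingDensity hg hε.2]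

end CrossesOver

namespace IsModelTriple

variable {a v : Fin 3 → E3}

theorem crossesOver (h : IsModelTriple a v) {j k : Fin 3} (hlt : a k 2 < a j 2) :
    CrossesOver (a j) (v j) (a k) (v k) where
  over_horizontal := h.1 j
  under_horizontal := h.1 k
  pr12_eq := by
    obtain ⟨-, -, h01, h12, -⟩ := h
    have hall (i : Fin 3) : pr12 (a i) = pr12 (a 0) := by
      fin_cases i
      exacts [rfl, h01.symm, (h01.trans h12).symm]
    rw [hall j, hall k]
  lt := hlt
  transverse := h.2.2.2.2.1 j k fun hjk ↦ hlt.ne' (congrArg (a · 2) hjk)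

theorem crossesOver_one_zero (h : IsModelTriple a v) :
    CrossesOver (a 1) (v 1) (a 0) (v 0) :=
  h.crossesOver h.2.2.2.2.2.1

theorem crossesOver_one_two (h : IsModelTriple a v) :
    CrossesOver (a 1) (v 1) (a 2) (v 2) :=
  h.crossesOver h.2.2.2.2.2.2

theorem eventually_IX2model (h : IsModelTriple a v) {δ : ℝ} (hδ : 0 < δ) :
    ∀ᶠ ε in 𝓝[>] 0, ∀ g, IsEtaForm ε g → IX2model a v δ g =
      Real.sign (cross2 (v 1) (v 0)) * Real.sign (cross2 (v 1) (v 2)) / 2 :=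
  h.crossesOver_one_zero.eventually_setIntegral_wedge22 h.crossesOver_one_two (by decide) hδ

theorem eventually_IX1model (h : IsModelTriple a v) (hlt : a 2 2 < a 0 2) {δ : ℝ} (hδ : 0 < δ) :
    ∀ᶠ ε in 𝓝[>] 0, ∀ g, IsEtaForm ε g → IX1model a v δ g =
      Real.sign (cross2 (v 1) (v 0)) * Real.sign (cross2 (v 0) (v 2)) / 2 :=
  h.crossesOver_one_zero.eventually_setIntegral_wedge22 (h.crossesOver hlt) (by decide) hδ

theorem eventually_IX3model (h : IsModelTriple a v) (hlt : a 0 2 < a 2 2) {δ : ℝ} (hδ : 0 < δ) :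
    ∀ᶠ ε in 𝓝[>] 0, ∀ g, IsEtaForm ε g → IX3model a v δ g =
      Real.sign (cross2 (v 2) (v 0)) * Real.sign (cross2 (v 1) (v 2)) / 2 :=
  (h.crossesOver hlt).eventually_setIntegral_wedge22 h.crossesOver_one_two (by decide) hδ

end IsModelTriple

/-- explicit values of the model triple-point integrals. For every
model triple point, all signs `s₁, s₂, s₃ ∈ {+1, -1}` and all sufficiently small
`ε > 0`: `I_X^{X′₁,s₁,s₂,s₃} = s₁s₂/2`,
`I_X^{(X′₂,l),s₁,s₂,s₃} = I_X^{(X′₂,r),s₁,s₂,s₃} = s₂s₃/2` and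
`I_X^{X′₃,s₁,s₂,s₃} = s₃s₁/2`. -/
theorem statement16 (s1 s2 s3 : ℝ) (h1 : s1 = 1 ∨ s1 = -1) (h2 : s2 = 1 ∨ s2 = -1)
    (h3 : s3 = 1 ∨ s3 = -1) :
    (∀ (a v : Fin 3 → E3) (δ : ℝ), 0 < δ → ModelLeft a v s1 s2 s3 →
      ∃ ε₀ > (0 : ℝ), ∀ ε : ℝ, 0 < ε → ε < ε₀ → ∀ g : E3 → ℝ, IsEtaForm ε g →
        IX1model a v δ g = s1 * s2 / 2 ∧ IX2model a v δ g = s2 * s3 / 2) ∧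
    (∀ (a v : Fin 3 → E3) (δ : ℝ), 0 < δ → ModelRight a v s1 s2 s3 →
      ∃ ε₀ > (0 : ℝ), ∀ ε : ℝ, 0 < ε → ε < ε₀ → ∀ g : E3 → ℝ, IsEtaForm ε g →
        IX2model a v δ g = s2 * s3 / 2 ∧ IX3model a v δ g = s3 * s1 / 2) := by
  constructor
  · rintro a v δ hδ ⟨hm, hlt, rfl, rfl, rfl⟩
    apply exists_pos_forall_of_eventually_nhdsGT
    filter_upwards [hm.eventually_IX1model hlt hδ, hm.eventually_IX2model hδ] with ε hX1 hX2 g hg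
    exact ⟨(hX1 g hg).trans (by ring), hX2 g hg⟩
  · rintro a v δ hδ ⟨hm, hlt, rfl, rfl, rfl⟩
    apply exists_pos_forall_of_eventually_nhdsGT
    filter_upwards [hm.eventually_IX2model hδ, hm.eventually_IX3model hlt hδ] with ε hX2 hX3 g hg
    exact ⟨hX2 g hg, (hX3 g hg).trans (by ring)⟩

end
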